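/- Let X be an N×m real matrix such that both XᵀΦ and XᵀLΦ are invertible, and let Π_X := Φ(XᵀΦ)⁻¹Xᵀ be the oblique projection onto the column space of Φ along directions X. Then v̂_X := Φ(XᵀLΦ)⁻¹Xᵀ r is the unique element v̂ of the column space of Φ satisfying the projected Bellman equation v̂ = Π_X(T v̂); moreover v̂_X = Π_{LᵀX} v*, i.e., v̂_X = Φ(XᵀLΦ)⁻¹ XᵀL v*, so v̂_X is the projection of the true value v* onto the column space of Φ orthogonally to the span of LᵀX. -/

import Mathlib

open Matrix

/-!
Put `u = Π_Y v` in variational form: `u` is the element of the column space of `Φ` with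
`Yᵀ u = Yᵀ v`. Since `T v = r + v - L v`, the equation `v = Π_X (T v)` therefore says that `v` is in
the column space of `Φ` and `Xᵀ L v = Xᵀ r`, a Petrov–Galerkin system whose only solution is
`Φ (Xᵀ L Φ)⁻¹ Xᵀ r`. As `r = L v*`, the same system reads `(Lᵀ X)ᵀ v = (Lᵀ X)ᵀ v*`, so its solution
is the projection of `v*` along the directions `Lᵀ X`.
-/

section PetrovGalerkin

variable {R k n m : Type*} [CommRing R] [Fintype k] [Fintype n] [Fintype m] [DecidableEq m]

/-- The Petrov–Galerkin solution operator of the equation `L v = b`, with trial space the column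
space of `Φ` and test vectors the columns of `Y`. It is meaningful only if `Yᵀ * L * Φ` is
invertible. -/
noncomputable def petrovGalerkin (L : Matrix k n R) (Φ : Matrix n m R) (Y : Matrix k m R) :
    Matrix n k R :=
  Φ * (Yᵀ * L * Φ)⁻¹ * Yᵀ

/-- The oblique projection `Π_Y` onto the column space of `Φ`. Its kernel is that of `Yᵀ`, the
orthogonal complement of the directions spanned by the columns of `Y`. It is meaningful only if
`Yᵀ * Φ` is invertible. -/
noncomputable def obliqueProjection (Φ Y : Matrix n m R) : Matrix n n R :=
  Φ * (Yᵀ * Φ)⁻¹ * Yᵀ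

theorem petrovGalerkin_one [DecidableEq n] (Φ Y : Matrix n m R) :
    petrovGalerkin 1 Φ Y = obliqueProjection Φ Y := by
  rw [petrovGalerkin, obliqueProjection, Matrix.mul_one]

theorem petrovGalerkin_mul (L : Matrix k n R) (Φ : Matrix n m R) (Y : Matrix k m R) :
    petrovGalerkin L Φ Y * L = obliqueProjection Φ (Lᵀ * Y) := by
  rw [petrovGalerkin, obliqueProjection, transpose_mul, transpose_transpose, Matrix.mul_assoc _ Yᵀ]

theorem eq_petrovGalerkin_mulVec_iff {L : Matrix k n R} {Φ : Matrix n m R} {Y : Matrix k m R}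
    (h : IsUnit (Yᵀ * L * Φ)) {v : n → R} {b : k → R} :
    v = petrovGalerkin L Φ Y *ᵥ b ↔ (∃ w, v = Φ *ᵥ w) ∧ Yᵀ *ᵥ (L *ᵥ v) = Yᵀ *ᵥ b := by
  have hdet := (isUnit_iff_isUnit_det _).1 h
  have apply_eq : petrovGalerkin L Φ Y *ᵥ b = Φ *ᵥ ((Yᵀ * L * Φ)⁻¹ *ᵥ (Yᵀ *ᵥ b)) := by
    simp only [petrovGalerkin, mulVec_mulVec, Matrix.mul_assoc]
  have test_eq (w : m → R) : Yᵀ *ᵥ (L *ᵥ (Φ *ᵥ w)) = (Yᵀ * L * Φ) *ᵥ w := by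
    simp only [mulVec_mulVec, Matrix.mul_assoc]
  rw [apply_eq]
  constructor
  · rintro rfl
    refine ⟨⟨_, rfl⟩, ?_⟩
    rw [test_eq, mulVec_mulVec _ (Yᵀ * L * Φ), mul_nonsing_inv _ hdet, one_mulVec]
  · rintro ⟨⟨w, rfl⟩, hw⟩
    rw [← hw, test_eq, mulVec_mulVec _ _ (Yᵀ * L * Φ), nonsing_inv_mul _ hdet, one_mulVec]

theorem eq_obliqueProjection_mulVec_iff {Φ Y : Matrix n m R} (h : IsUnit (Yᵀ * Φ))
    {u v : n → R} :
    u = obliqueProjection Φ Y *ᵥ v ↔ (∃ w, u = Φ *ᵥ w) ∧ Yᵀ *ᵥ u = Yᵀ *ᵥ v := by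
  classical
  rw [← petrovGalerkin_one, eq_petrovGalerkin_mulVec_iff (by rwa [Matrix.mul_one]), one_mulVec]

theorem eq_obliqueProjection_mulVec_add_iff_eq_petrovGalerkin_mulVec [DecidableEq n]
    {L : Matrix n n R} {Φ X : Matrix n m R} (hX : IsUnit (Xᵀ * Φ)) (hXL : IsUnit (Xᵀ * L * Φ))
    {r v : n → R} :
    v = obliqueProjection Φ X *ᵥ (r + (1 - L) *ᵥ v) ↔ v = petrovGalerkin L Φ X *ᵥ r := by
  have test_iff : Xᵀ *ᵥ v = Xᵀ *ᵥ (r + (1 - L) *ᵥ v) ↔ Xᵀ *ᵥ (L *ᵥ v) = Xᵀ *ᵥ r := by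
    rw [sub_mulVec, one_mulVec, mulVec_add, mulVec_sub, ← add_sub_assoc, eq_sub_iff_add_eq',
      add_left_inj]
  rw [eq_obliqueProjection_mulVec_iff hX, eq_petrovGalerkin_mulVec_iff hXL, test_iff]

end PetrovGalerkin

section Stochastic

variable {n : Type*} [Fintype n] [DecidableEq n]

theorem isUnit_one_sub_of_sum_norm_row_lt_one {𝕜 : Type*} [NormedField 𝕜] {K : Matrix n n 𝕜}
    (h : ∀ i, ∑ j, ‖K i j‖ < 1) : IsUnit (1 - K) := by
  rw [isUnit_iff_isUnit_det, isUnit_iff_ne_zero]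
  refine det_ne_zero_of_sum_row_lt_diag fun i => ?_
  have off_diag : ∀ j ∈ Finset.univ.erase i, ‖(1 - K) i j‖ = ‖K i j‖ := fun j hj => by
    rw [Matrix.sub_apply, one_apply_ne (Finset.ne_of_mem_erase hj).symm, zero_sub, norm_neg]
  calc ∑ j ∈ Finset.univ.erase i, ‖(1 - K) i j‖
      = ∑ j ∈ Finset.univ.erase i, ‖K i j‖ := Finset.sum_congr rfl off_diag
    _ < 1 - ‖K i i‖ := by
        rw [lt_sub_iff_add_lt, Finset.sum_erase_add _ _ (Finset.mem_univ i)]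
        exact h i
    _ ≤ ‖(1 - K) i i‖ := by
        rw [Matrix.sub_apply, one_apply_eq]
        simpa only [norm_one] using norm_sub_norm_le (1 : 𝕜) (K i i)

theorem isUnit_one_sub_smul_of_mem_rowStochastic {P : Matrix n n ℝ}
    (hP : P ∈ rowStochastic ℝ n) {γ : ℝ} (hγ : |γ| < 1) : IsUnit (1 - γ • P) := by
  obtain ⟨nonneg, row_sum⟩ := mem_rowStochastic_iff_sum.1 hP
  refine isUnit_one_sub_of_sum_norm_row_lt_one fun i => ?_
  calc ∑ j, ‖(γ • P) i j‖ = ∑ j, |γ| * P i j :=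
        Finset.sum_congr rfl fun j _ => by
          rw [Matrix.smul_apply, norm_smul, Real.norm_eq_abs, Real.norm_of_nonneg (nonneg i j)]
    _ = |γ| := by rw [← Finset.mul_sum, row_sum i, mul_one]
    _ < 1 := hγ

end Stochastic

theorem stmt_9_general {R n m : Type*} [CommRing R] [Fintype n] [DecidableEq n] [Fintype m]
    [DecidableEq m] {L : Matrix n n R} {r : n → R} {T : (n → R) → n → R}
    (hT : ∀ v, T v = r + (1 - L) *ᵥ v) {Φ X : Matrix n m R}
    (hX : IsUnit (Xᵀ * Φ)) (hXL : IsUnit (Xᵀ * L * Φ)) :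
    (∃ w, petrovGalerkin L Φ X *ᵥ r = Φ *ᵥ w) ∧
    (∀ v, v = obliqueProjection Φ X *ᵥ T v ↔ v = petrovGalerkin L Φ X *ᵥ r) ∧
    (∀ vstar, L *ᵥ vstar = r →
      petrovGalerkin L Φ X *ᵥ r = obliqueProjection Φ (Lᵀ * X) *ᵥ vstar) := by
  refine ⟨((eq_petrovGalerkin_mulVec_iff hXL).1 rfl).1, fun v => ?_, ?_⟩
  · rw [hT, eq_obliqueProjection_mulVec_add_iff_eq_petrovGalerkin_mulVec hX hXL]
  · rintro vstar rfl
    rw [mulVec_mulVec, petrovGalerkin_mul]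

theorem stmt_9 (N m : ℕ) (hm : 0 < m) (hmN : m ≤ N)
    (P : Matrix (Fin N) (Fin N) ℝ)
    (hP0 : ∀ i j, 0 ≤ P i j) (hP1 : ∀ i, ∑ j, P i j = 1)
    (γ : ℝ) (hγ0 : 0 < γ) (hγ1 : γ < 1)
    (r : Fin N → ℝ)
    (T : (Fin N → ℝ) → Fin N → ℝ) (hT : ∀ v, T v = r + γ • P.mulVec v)
    (L : Matrix (Fin N) (Fin N) ℝ) (hL : L = 1 - γ • P)
    (vstar : Fin N → ℝ) (hv : vstar = L⁻¹.mulVec r)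
    (Φ : Matrix (Fin N) (Fin m) ℝ) (hΦ : Function.Injective Φ.mulVec)
    (X : Matrix (Fin N) (Fin m) ℝ)
    (hX1 : IsUnit (Xᵀ * Φ)) (hX2 : IsUnit (Xᵀ * L * Φ))
    (PiX : Matrix (Fin N) (Fin N) ℝ) (hPiX : PiX = Φ * (Xᵀ * Φ)⁻¹ * Xᵀ)
    (vX : Fin N → ℝ) (hvX : vX = (Φ * (Xᵀ * L * Φ)⁻¹ * Xᵀ).mulVec r) :
    (∃ w, vX = Φ.mulVec w) ∧
    vX = PiX.mulVec (T vX) ∧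
    (∀ v : Fin N → ℝ, (∃ w, v = Φ.mulVec w) → v = PiX.mulVec (T v) → v = vX) ∧
    vX = (Φ * (Xᵀ * L * Φ)⁻¹ * Xᵀ * L).mulVec vstar := by
  subst hL hPiX hvX
  have isUnit_L : IsUnit (1 - γ • P) := isUnit_one_sub_smul_of_mem_rowStochastic
    (mem_rowStochastic_iff_sum.2 ⟨hP0, hP1⟩) (by rwa [abs_of_pos hγ0])
  have L_vstar : (1 - γ • P) *ᵥ vstar = r := by
    rw [hv, mulVec_mulVec, mul_nonsing_inv _ ((isUnit_iff_isUnit_det _).1 isUnit_L), one_mulVec]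
  obtain ⟨mem, fixed_iff, proj⟩ :=
    stmt_9_general (T := T) (r := r) (fun v => by rw [hT, sub_sub_cancel, smul_mulVec]) hX1 hX2
  exact ⟨mem, (fixed_iff _).2 rfl, fun v _ => (fixed_iff v).1,
    petrovGalerkin_mul _ Φ X ▸ proj vstar L_vstar⟩
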